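/- Let t₂ ≥ t₁ ≥ 2, Q ≥ 1, R ≥ 0 be integers. Then A_{t₁}(Q, 2R+1) ≥ (t₁/t₂)^Q · A_{t₂}(Q, 2R+1), where A_t(Q,d) is the maximum number of codewords in a code of length Q over an alphabet of size t with minimum Hamming distance d. -/

import Mathlib

/-- `A t Q d`: the maximum number of codewords in a code of length `Q` over an
alphabet of size `t` with minimum Hamming distance `d`. -/
noncomputable def maxCode (t Q d : ℕ) : ℕ :=
  sSup {n : ℕ | ∃ s : Finset (Fin Q → Fin t),
    (∀ x ∈ s, ∀ y ∈ s, x ≠ y → d ≤ hammingDist x y) ∧ s.card = n}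

/-!
Regard the larger alphabet as `ℤ/t₂`, and let `s` be a maximum code over it. Translations are
isometries of the Hamming distance, so every translate of `s` meets the words over the smaller
alphabet in a code of size at most `A_{t₁}(Q, d)`. On average over the `t₂ ^ Q` translations, this
intersection has `t₁ ^ Q * |s| / t₂ ^ Q` elements.
-/

open Finset Function
open scoped Pointwise

@[to_additive]
theorem sum_card_inter_smul {G : Type*} [Group G] [Fintype G] [DecidableEq G] (A B : Finset G) :
    ∑ g : G, #(A ∩ (g • B)) = #A * #B := by
  calc ∑ g : G, #(A ∩ (g • B))
      = ∑ g : G, #{ab ∈ A ×ˢ B⁻¹ | ab.1 * ab.2 = g} :=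
        sum_congr rfl fun g _ ↦ card_inter_smul A B g
    _ = #(A ×ˢ B⁻¹) := (card_eq_sum_card_fiberwise fun _ _ ↦ mem_coe.2 (mem_univ _)).symm
    _ = #A * #B := by rw [card_product, card_inv]

section HasMinDist

variable {ι : Type*} [Fintype ι] {α β : ι → Type*} [∀ i, DecidableEq (α i)]
  [∀ i, DecidableEq (β i)] {d : ℕ} {s t : Finset (∀ i, α i)}

/-- A code `s` has minimum distance at least `d`: its distinct words differ in at least `d`
positions. The `i`-th letters of words come from an alphabet `α i` that may depend on `i`. -/
def HasMinDist (d : ℕ) (s : Finset (∀ i, α i)) : Prop :=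
  ∀ x ∈ s, ∀ y ∈ s, x ≠ y → d ≤ hammingDist x y

theorem HasMinDist.mono (hst : s ⊆ t) (ht : HasMinDist d t) : HasMinDist d s :=
  fun x hx y hy ↦ ht x (hst hx) y (hst hy)

theorem hasMinDist_image_piMap_iff {f : ∀ i, α i → β i}
    (hf : ∀ i, Injective (f i)) : HasMinDist d (s.image (Pi.map f)) ↔ HasMinDist d s := by
  have hdist (x y : ∀ i, α i) : hammingDist (Pi.map f x) (Pi.map f y) = hammingDist x y :=
    hammingDist_comp f hf
  simp only [HasMinDist, forall_mem_image, hdist, (Injective.piMap hf).ne_iff]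

theorem HasMinDist.vadd [∀ i, Add (α i)] [∀ i, IsLeftCancelAdd (α i)]
    (hs : HasMinDist d s) (g : ∀ i, α i) : HasMinDist d (g +ᵥ s) :=
  (hasMinDist_image_piMap_iff fun i ↦ add_right_injective (g i)).2 hs

end HasMinDist

section MaxCode

variable {t Q d : ℕ}

theorem bddAbove_card_hasMinDist (t Q d : ℕ) :
    BddAbove {n : ℕ | ∃ s : Finset (Fin Q → Fin t), HasMinDist d s ∧ #s = n} := by
  refine ⟨Fintype.card (Fin Q → Fin t), ?_⟩
  rintro _ ⟨s, -, rfl⟩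
  exact card_le_univ s

theorem HasMinDist.card_le_maxCode {s : Finset (Fin Q → Fin t)} (hs : HasMinDist d s) :
    #s ≤ maxCode t Q d :=
  le_csSup (bddAbove_card_hasMinDist t Q d) ⟨s, hs, rfl⟩

theorem exists_hasMinDist_card_eq_maxCode (t Q d : ℕ) :
    ∃ s : Finset (Fin Q → Fin t), HasMinDist d s ∧ #s = maxCode t Q d :=
  Nat.sSup_mem (s := {n | ∃ s : Finset (Fin Q → Fin t), HasMinDist d s ∧ #s = n})
    ⟨0, ∅, by simp [HasMinDist], card_empty⟩ (bddAbove_card_hasMinDist t Q d)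

theorem HasMinDist.card_le_maxCode_of_subset_image {α : Fin Q → Type*} [∀ i, DecidableEq (α i)]
    {f : ∀ i, Fin t → α i} (hf : ∀ i, Injective (f i)) {s : Finset (∀ i, α i)}
    (hs : HasMinDist d s) (hsf : s ⊆ univ.image (Pi.map f)) : #s ≤ maxCode t Q d := by
  obtain ⟨s', -, rfl⟩ := subset_image_iff.1 hsf
  rw [card_image_of_injective s' (Injective.piMap hf)]
  exact ((hasMinDist_image_piMap_iff hf).1 hs).card_le_maxCode

theorem pow_mul_maxCode_le_pow_mul_maxCode {t₁ t₂ : ℕ} [NeZero t₂] (h : t₁ ≤ t₂) (Q d : ℕ) :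
    t₁ ^ Q * maxCode t₂ Q d ≤ t₂ ^ Q * maxCode t₁ Q d := by
  obtain ⟨s, hs, hs_card⟩ := exists_hasMinDist_card_eq_maxCode t₂ Q d
  have hf (_ : Fin Q) : Injective (Fin.castLE h) := Fin.castLE_injective h
  let A : Finset (Fin Q → Fin t₂) := univ.image (Pi.map fun _ ↦ Fin.castLE h)
  have hA_card : #A = t₁ ^ Q := by
    rw [card_image_of_injective _ (Injective.piMap hf), card_univ, Fintype.card_pi_const,
      Fintype.card_fin]
  have hA_inter (g : Fin Q → Fin t₂) : #(A ∩ (g +ᵥ s)) ≤ maxCode t₁ Q d :=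
    ((hs.vadd g).mono inter_subset_right).card_le_maxCode_of_subset_image hf inter_subset_left
  calc t₁ ^ Q * maxCode t₂ Q d
      = ∑ g : Fin Q → Fin t₂, #(A ∩ (g +ᵥ s)) := by rw [sum_card_inter_vadd, hA_card, hs_card]
    _ ≤ ∑ _g : Fin Q → Fin t₂, maxCode t₁ Q d := sum_le_sum fun g _ ↦ hA_inter g
    _ = t₂ ^ Q * maxCode t₁ Q d := by simp

end MaxCode

theorem alphabet_change_general {t₁ t₂ : ℕ} (ht₂ : 0 < t₂) (h : t₁ ≤ t₂) (Q d : ℕ) :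
    ((t₁ : ℝ) / t₂) ^ Q * (maxCode t₂ Q d : ℝ) ≤ (maxCode t₁ Q d : ℝ) := by
  have : NeZero t₂ := ⟨ht₂.ne'⟩
  have ht₂_pow : (0 : ℝ) < (t₂ : ℝ) ^ Q := by positivity
  rw [div_pow, div_mul_eq_mul_div, div_le_iff₀' ht₂_pow]
  exact_mod_cast pow_mul_maxCode_le_pow_mul_maxCode h Q d

/-- `A_{t₁}(Q, 2R+1) ≥ (t₁/t₂)^Q · A_{t₂}(Q, 2R+1)`. -/
theorem alphabet_change (t₁ t₂ Q R : ℕ) (h1 : 2 ≤ t₁) (h2 : t₁ ≤ t₂) (hQ : 1 ≤ Q) :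
    ((t₁ : ℝ) / t₂) ^ Q * (maxCode t₂ Q (2 * R + 1) : ℝ)
      ≤ (maxCode t₁ Q (2 * R + 1) : ℝ) :=
  alphabet_change_general (by lia) h2 Q (2 * R + 1)
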